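/- Let U ⊆ ℝ² be open with coordinates (X¹, X²), let A, B : U → ℝ be C¹ and nowhere vanishing, and let Γ be the torsion-free connection with nonzero components Γ¹₁₁ = ∂₁A/A − 2B, Γ²₂₂ = ∂₂B/B − 2A, Γ¹₁₂ = Γ¹₂₁ = −(½∂₂A/A + A), Γ²₁₂ = Γ²₂₁ = −(½∂₁B/B + B), and Γ¹₂₂ = Γ²₁₁ = 0. Define the 1-form Υ by Υ₁ = ½∂₁B/B + B and Υ₂ = ½∂₂A/A + A, and the symmetric tensor h with h₁₁ = h₂₂ = 0 and h₁₂ = h₂₁ = A·B. Then the projectively changed connection Γ̂^a_{bc} = Γ^a_{bc} + δ^a_b Υ_c + δ^a_c Υ_b is torsion-free and satisfies ∂_a h_{bc} − Γ̂^d_{ab} h_{dc} − Γ̂^d_{ac} h_{bd} = 0 on U; that is, Γ̂ is the Levi-Civita connection of the (Lorentzian) metric h = AB·dX¹⊙dX², so Γ is projectively equivalent to a metric connection (metrisable by h). -/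

import Mathlib

/-- Partial derivative `∂_{i+1} f` on `ℝ²` (points as `Fin 2 → ℝ`; index `0 ↔ X¹`). -/
noncomputable def pdv (i : Fin 2) (f : (Fin 2 → ℝ) → ℝ) (x : Fin 2 → ℝ) : ℝ :=
  fderiv ℝ f x (Pi.single i 1)

/-- The connection built from `A` and `B`: nonzero components
`Γ¹₁₁ = ∂₁A/A − 2B`, `Γ²₂₂ = ∂₂B/B − 2A`, `Γ¹₁₂ = −(½∂₂A/A + A)`,
`Γ²₁₂ = −(½∂₁B/B + B)` (index `0 ↔ 1`, `1 ↔ 2`). -/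
noncomputable def gammaAB (A B : (Fin 2 → ℝ) → ℝ) :
    Fin 2 → Fin 2 → Fin 2 → (Fin 2 → ℝ) → ℝ :=
  fun a b c x =>
    if a = 0 then
      (if b = 0 ∧ c = 0 then pdv 0 A x / A x - 2 * B x
       else if b ≠ c then -((1 / 2) * pdv 1 A x / A x + A x)
       else 0)
    else
      (if b = 1 ∧ c = 1 then pdv 1 B x / B x - 2 * A x
       else if b ≠ c then -((1 / 2) * pdv 0 B x / B x + B x)
       else 0)

/-- The 1-form `Υ` with `Υ₁ = ½∂₁B/B + B` and `Υ₂ = ½∂₂A/A + A`. -/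
noncomputable def upsAB (A B : (Fin 2 → ℝ) → ℝ) : Fin 2 → (Fin 2 → ℝ) → ℝ :=
  fun a x =>
    if a = 0 then (1 / 2) * pdv 0 B x / B x + B x
    else (1 / 2) * pdv 1 A x / A x + A x

/-- The projectively changed connection `Γ̂^a_{bc} = Γ^a_{bc} + δ^a_b Υ_c + δ^a_c Υ_b`. -/
noncomputable def gammaHat (A B : (Fin 2 → ℝ) → ℝ) :
    Fin 2 → Fin 2 → Fin 2 → (Fin 2 → ℝ) → ℝ :=
  fun a b c x =>
    gammaAB A B a b c x + (if a = b then upsAB A B c x else 0)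
      + (if a = c then upsAB A B b x else 0)

/-- The symmetric tensor `h` with `h₁₂ = h₂₁ = A·B` and `h₁₁ = h₂₂ = 0`. -/
noncomputable def metAB (A B : (Fin 2 → ℝ) → ℝ) :
    Fin 2 → Fin 2 → (Fin 2 → ℝ) → ℝ :=
  fun b c x => if b = c then 0 else A x * B x

/-! In null coordinates the metric `φ dX¹⊙dX²` has a Levi-Civita connection whose only nonzero
components are `Γᵃₐₐ = ∂ₐφ/φ`, the logarithmic derivatives of `φ`. The 1-form `Υ` is chosen to
cancel the mixed components of `gammaAB A B`, and it turns `Γ¹₁₁` into `∂₁A/A + ∂₁B/B` and `Γ²₂₂`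
into `∂₂A/A + ∂₂B/B`. These are the logarithmic derivatives of `AB`, so `Γ̂` is the Levi-Civita
connection of `AB dX¹⊙dX²`. -/

/-- The change of the Christoffel symbols `Γ` by the 1-form `Υ` that preserves unparametrised
geodesics, at a point and over any index type. -/
def projectiveChange {ι R : Type*} [DecidableEq ι] [AddCommMonoid R]
    (Γ : ι → ι → ι → R) (Υ : ι → R) (a b c : ι) : R :=
  Γ a b c + (if a = b then Υ c else 0) + (if a = c then Υ b else 0)

/-- The components `∇ₐ h_{bc}` of the covariant derivative of a covariant 2-tensor `h` with respect
to the connection with Christoffel symbols `Γ`, the upper index of `Γ` being its first argument. -/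
noncomputable def covDeriv (Γ : Fin 2 → Fin 2 → Fin 2 → (Fin 2 → ℝ) → ℝ)
    (h : Fin 2 → Fin 2 → (Fin 2 → ℝ) → ℝ) (a b c : Fin 2) (x : Fin 2 → ℝ) : ℝ :=
  pdv a (h b c) x - ∑ d, Γ d a b x * h d c x - ∑ d, Γ d a c x * h b d x

/-- The tensor `φ dX¹⊙dX²`, a Lorentzian metric in null coordinates where `φ ≠ 0`, normalised so
that its off-diagonal components are `φ`. -/
def nullMetric (φ : (Fin 2 → ℝ) → ℝ) (b c : Fin 2) (x : Fin 2 → ℝ) : ℝ :=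
  if b = c then 0 else φ x

/-- The Levi-Civita connection of `nullMetric φ`, with the junk value `0` where `φ` vanishes. -/
noncomputable def nullConnection (φ : (Fin 2 → ℝ) → ℝ) (a b c : Fin 2) (x : Fin 2 → ℝ) : ℝ :=
  if a = b ∧ a = c then pdv a φ x / φ x else 0

theorem projectiveChange_symm {ι R : Type*} [DecidableEq ι] [AddCommMonoid R]
    {Γ : ι → ι → ι → R} (hΓ : ∀ a b c, Γ a b c = Γ a c b) (Υ : ι → R) (a b c : ι) :
    projectiveChange Γ Υ a b c = projectiveChange Γ Υ a c b := by
  simp only [projectiveChange, hΓ a b c, add_right_comm]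

theorem pdv_mul_div_mul {A B : (Fin 2 → ℝ) → ℝ} {x : Fin 2 → ℝ}
    (hA : DifferentiableAt ℝ A x) (hB : DifferentiableAt ℝ B x)
    (hA0 : A x ≠ 0) (hB0 : B x ≠ 0) (i : Fin 2) :
    pdv i (A * B) x / (A x * B x) = pdv i A x / A x + pdv i B x / B x := by
  have leibniz : pdv i (A * B) x = A x * pdv i B x + B x * pdv i A x := by
    simp [pdv, fderiv_mul hA hB]
  rw [leibniz]
  field_simp
  ring

theorem sum_nullConnection_mul (φ : (Fin 2 → ℝ) → ℝ) (a b : Fin 2) (x v : Fin 2 → ℝ) :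
    ∑ d, nullConnection φ d a b x * v d = if a = b then pdv a φ x / φ x * v b else 0 := by
  rcases eq_or_ne a b with rfl | hab
  · simp [nullConnection]
  · simp [nullConnection, ite_and, hab]

theorem covDeriv_nullConnection_nullMetric {φ : (Fin 2 → ℝ) → ℝ} {x : Fin 2 → ℝ} (hφ : φ x ≠ 0)
    (a b c : Fin 2) : covDeriv (nullConnection φ) (nullMetric φ) a b c x = 0 := by
  rw [covDeriv, sum_nullConnection_mul φ a b x (nullMetric φ · c x),
    sum_nullConnection_mul φ a c x (nullMetric φ b · x)]
  rcases eq_or_ne b c with rfl | hbc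
  · have diag : nullMetric φ b b = fun _ => 0 := funext fun _ => if_pos rfl
    simp [diag, pdv]
  · have offDiag : nullMetric φ b c = φ := funext fun _ => if_neg hbc
    obtain ⟨rfl, hac⟩ | ⟨rfl, hab⟩ : a = b ∧ a ≠ c ∨ a = c ∧ a ≠ b := by lia
    · simp [offDiag, hac, hφ]
    · simp [offDiag, hab, hφ]

theorem gammaAB_symm (A B : (Fin 2 → ℝ) → ℝ) (a b c : Fin 2) (x : Fin 2 → ℝ) :
    gammaAB A B a b c x = gammaAB A B a c b x := by
  simp only [gammaAB, and_comm, ne_comm]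

theorem gammaHat_symm (A B : (Fin 2 → ℝ) → ℝ) (a b c : Fin 2) (x : Fin 2 → ℝ) :
    gammaHat A B a b c x = gammaHat A B a c b x :=
  projectiveChange_symm (gammaAB_symm A B · · · x) (upsAB A B · x) a b c

theorem gammaHat_eq_nullConnection {A B : (Fin 2 → ℝ) → ℝ} {x : Fin 2 → ℝ}
    (hA : DifferentiableAt ℝ A x) (hB : DifferentiableAt ℝ B x)
    (hA0 : A x ≠ 0) (hB0 : B x ≠ 0) (a b c : Fin 2) :
    gammaHat A B a b c x = nullConnection (A * B) a b c x := by
  have logDeriv_AB := pdv_mul_div_mul hA hB hA0 hB0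
  fin_cases a <;> fin_cases b <;> fin_cases c <;>
    simp [gammaHat, gammaAB, upsAB, nullConnection, logDeriv_AB] <;> ring

theorem gammaAB_metrisable_by_h_general (U : Set (Fin 2 → ℝ)) (A B : (Fin 2 → ℝ) → ℝ)
    (hA : ∀ x ∈ U, DifferentiableAt ℝ A x) (hB : ∀ x ∈ U, DifferentiableAt ℝ B x)
    (hA0 : ∀ x ∈ U, A x ≠ 0) (hB0 : ∀ x ∈ U, B x ≠ 0) :
    (∀ (a b c : Fin 2) (x : Fin 2 → ℝ), gammaHat A B a b c x = gammaHat A B a c b x)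
    ∧ (∀ a b c : Fin 2, ∀ x ∈ U,
        pdv a (metAB A B b c) x
          - ∑ d, gammaHat A B d a b x * metAB A B d c x
          - ∑ d, gammaHat A B d a c x * metAB A B b d x = 0) := by
  refine ⟨gammaHat_symm A B, fun a b c x hx => ?_⟩
  have metAB_eq : metAB A B = nullMetric (A * B) := rfl
  simp only [metAB_eq, gammaHat_eq_nullConnection (hA x hx) (hB x hx) (hA0 x hx) (hB0 x hx)]
  exact covDeriv_nullConnection_nullMetric (mul_ne_zero (hA0 x hx) (hB0 x hx)) a b c

/-- The projective change of `gammaAB A B` by `Υ` is torsion-free and annihilates the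
metric `h = AB dX¹⊙dX²`: the connection is metrisable by `h`. -/
theorem gammaAB_metrisable_by_h
    (U : Set (Fin 2 → ℝ)) (hU : IsOpen U)
    (A B : (Fin 2 → ℝ) → ℝ)
    (hAC1 : ContDiffOn ℝ 1 A U) (hBC1 : ContDiffOn ℝ 1 B U)
    (hA0 : ∀ x ∈ U, A x ≠ 0) (hB0 : ∀ x ∈ U, B x ≠ 0) :
    (∀ (a b c : Fin 2) (x : Fin 2 → ℝ), gammaHat A B a b c x = gammaHat A B a c b x)
    ∧ (∀ a b c : Fin 2, ∀ x ∈ U,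
        pdv a (metAB A B b c) x
          - ∑ d, gammaHat A B d a b x * metAB A B d c x
          - ∑ d, gammaHat A B d a c x * metAB A B b d x = 0) :=
  gammaAB_metrisable_by_h_general U A B
    (fun _ hx => (hAC1.differentiableOn one_ne_zero).differentiableAt (hU.mem_nhds hx))
    (fun _ hx => (hBC1.differentiableOn one_ne_zero).differentiableAt (hU.mem_nhds hx)) hA0 hB0
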